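/- Strict pre-dissipativity at some equilibrium with some quadratic storage (Corollary 4.11): Assume A is densely defined and closed, K is coercive (there is c > 0 with ‖Ku‖ ≥ c‖u‖ for all u ∈ U), and the range {Ax + Bu : x ∈ dom A, u ∈ U} is closed in H. Then there exist a controlled equilibrium (x_e,u_e), a bounded self-adjoint operator P on H, w ∈ H and α of class 𝒦 such that 2Re⟨Ax + Bu, Px + w⟩ ≤ ℓ(x,u) − ℓ(x_e,u_e) − α(‖x − x_e‖) for all x ∈ dom A, u ∈ U, if and only if there exist a bounded self-adjoint operator Q on H and m > 0 such that ‖Cx‖² − 2Re⟨Ax, Qx⟩ ≥ m‖x‖² for all x ∈ dom A. -/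

import Mathlib

open scoped InnerProductSpace
open RCLike ContinuousLinearMap

/-- A function of class `𝒦`: continuous, strictly increasing on `[0,∞)` with `α 0 = 0`. -/
def IsClassK (α : ℝ → ℝ) : Prop :=
  ContinuousOn α (Set.Ici 0) ∧ StrictMonoOn α (Set.Ici 0) ∧ α 0 = 0

/-- The generalized linear-quadratic stage cost
`ℓ(x,u) = ‖Cx‖² + ‖Ku‖² + 2Re⟨z,x⟩ + 2Re⟨v,u⟩`. -/
noncomputable def ell {𝕜 H U Y Z : Type*} [RCLike 𝕜]
    [NormedAddCommGroup H] [InnerProductSpace 𝕜 H]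
    [NormedAddCommGroup U] [InnerProductSpace 𝕜 U]
    [NormedAddCommGroup Y] [InnerProductSpace 𝕜 Y]
    [NormedAddCommGroup Z] [InnerProductSpace 𝕜 Z]
    (C : H →L[𝕜] Y) (K : U →L[𝕜] Z) (z : H) (v : U) (x : H) (u : U) : ℝ :=
  ‖C x‖ ^ 2 + ‖K u‖ ^ 2 + 2 * re ⟪z, x⟫_𝕜 + 2 * re ⟪v, u⟫_𝕜

theorem aux_closed_range {𝕜 E F : Type*} [RCLike 𝕜]
    [NormedAddCommGroup E] [NormedSpace 𝕜 E] [CompleteSpace E]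
    [NormedAddCommGroup F] [InnerProductSpace 𝕜 F] [CompleteSpace F]
    (T : E →L[𝕜] F) (hT : IsClosed (Set.range T)) (φ : E →L[𝕜] 𝕜)
    (hφ : ∀ e, T e = 0 → φ e = 0) :
    ∃ e0 : E, ∀ e, φ e = ⟪T e0, T e⟫_𝕜 := by
  let R : Submodule 𝕜 F := LinearMap.range (T : E →ₗ[𝕜] F)
  have hR : IsClosed (R : Set F) := by
    have : (R : Set F) = Set.range T := by ext; simp [R]
    rw [this]; exact hT
  haveI : CompleteSpace R := hR.completeSpace_coe
  let T' : E →L[𝕜] R := T.codRestrict R (fun e => ⟨e, rfl⟩)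
  have hsurj : Function.Surjective T' := by
    rintro ⟨_, e, rfl⟩; exact ⟨e, rfl⟩
  obtain ⟨M, hM, hpre⟩ := T'.exists_preimage_norm_le hsurj
  have hmem : (φ : E →ₗ[𝕜] 𝕜) ∈ LinearMap.range (T' : E →ₗ[𝕜] R).dualMap := by
    rw [LinearMap.range_dualMap_eq_dualAnnihilator_ker, Submodule.mem_dualAnnihilator]
    intro e he
    apply hφ
    have : T' e = 0 := he
    exact congrArg Subtype.val this
  obtain ⟨ψ, hψ⟩ := hmem
  have hψ' : ∀ e, ψ (T' e) = φ e := fun e => by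
    have := LinearMap.congr_fun hψ e
    simpa using this
  let Ψ : R →L[𝕜] 𝕜 := ψ.mkContinuous (‖φ‖ * M) (by
    intro y
    obtain ⟨e, rfl, he⟩ := hpre y
    rw [hψ']
    calc ‖φ e‖ ≤ ‖φ‖ * ‖e‖ := φ.le_opNorm e
      _ ≤ ‖φ‖ * (M * ‖T' e‖) := by gcongr
      _ = _ := by ring)
  obtain ⟨e0, he0⟩ := hsurj ((InnerProductSpace.toDual 𝕜 R).symm Ψ)
  refine ⟨e0, fun e => ?_⟩
  have h1 : ⟪T' e0, T' e⟫_𝕜 = Ψ (T' e) := by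
    rw [he0]; exact InnerProductSpace.toDual_symm_apply
  rw [← hψ' e]
  exact h1.symm

theorem aux_bounded_below {𝕜 E F : Type*} [RCLike 𝕜]
    [NormedAddCommGroup E] [NormedSpace 𝕜 E] [CompleteSpace E]
    [NormedAddCommGroup F] [InnerProductSpace 𝕜 F] [CompleteSpace F]
    (S : E →L[𝕜] F) (M : ℝ) (hM : 0 ≤ M) (hS : ∀ e, ‖e‖ ≤ M * ‖S e‖) (φ : E →L[𝕜] 𝕜) :
    ∃ e0 : E, ∀ e, φ e = ⟪S e0, S e⟫_𝕜 := by
  refine aux_closed_range S ?_ φ ?_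
  · have : AntilipschitzWith ⟨M, hM⟩ S := AddMonoidHomClass.antilipschitz_of_bound S hS
    exact this.isClosed_range S.uniformContinuous
  · intro n hn
    have : n = 0 := by
      have := hS n
      rw [hn, norm_zero, mul_zero] at this
      exact norm_le_zero_iff.1 this
    rw [this, map_zero]

theorem aux_coercive {𝕜 H U Y Z : Type*} [RCLike 𝕜]
    [NormedAddCommGroup H] [InnerProductSpace 𝕜 H] [CompleteSpace H]
    [NormedAddCommGroup U] [InnerProductSpace 𝕜 U]
    [NormedAddCommGroup Y] [InnerProductSpace 𝕜 Y]
    [NormedAddCommGroup Z] [InnerProductSpace 𝕜 Z]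
    (A : H →ₗ.[𝕜] H)
    (B : U →L[𝕜] H) (C : H →L[𝕜] Y) (K : U →L[𝕜] Z)
    (c : ℝ) (hc : 0 < c) (hK : ∀ u : U, c * ‖u‖ ≤ ‖K u‖)
    (Q : H →L[𝕜] H) (hQ : IsSelfAdjoint Q) (m : ℝ) (hm : 0 < m)
    (h : ∀ x : A.domain,
        m * ‖(x : H)‖ ^ 2 ≤ ‖C (x : H)‖ ^ 2 - 2 * re ⟪A x, Q (x : H)⟫_𝕜) :
    ∃ P : H →L[𝕜] H, IsSelfAdjoint P ∧ ∃ δ : ℝ, 0 < δ ∧ ∀ (x : A.domain) (u : U),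
      δ * (‖(x : H)‖ ^ 2 + ‖u‖ ^ 2) ≤
        ‖C (x : H)‖ ^ 2 + ‖K u‖ ^ 2 - 2 * re ⟪A x + B u, P (x : H)⟫_𝕜 := by
  set b := ‖B‖ * ‖Q‖ with hb
  have hb0 : 0 ≤ b := by positivity
  obtain ⟨ε, hε, hε1, hε2⟩ : ∃ ε : ℝ, 0 < ε ∧ ε ≤ 1 ∧ ε * (2 * b ^ 2 / m) ≤ c ^ 2 / 2 := by
    have h0 : 0 < 2 * b ^ 2 / m + 1 := by positivity
    refine ⟨min 1 (c ^ 2 / 2 / (2 * b ^ 2 / m + 1)), by positivity, min_le_left _ _, ?_⟩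
    calc _ ≤ (c ^ 2 / 2 / (2 * b ^ 2 / m + 1)) * (2 * b ^ 2 / m + 1) := by
          gcongr
          · exact min_le_right _ _
          · linarith
      _ = _ := by field_simp
  refine ⟨(ε : 𝕜) • Q, ?_, min (ε * m / 2) (c ^ 2 / 2), by positivity, fun x u => ?_⟩
  · exact IsSelfAdjoint.smul (by simp [IsSelfAdjoint]) hQ
  have e1 : re ⟪A x + B u, ((ε : 𝕜) • Q) (x : H)⟫_𝕜
      = ε * (re ⟪A x, Q (x : H)⟫_𝕜 + re ⟪B u, Q (x : H)⟫_𝕜) := by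
    rw [ContinuousLinearMap.smul_apply, inner_smul_right, RCLike.re_ofReal_mul, inner_add_left,
      map_add]
  have e2 : re ⟪B u, Q (x : H)⟫_𝕜 ≤ b * ‖u‖ * ‖(x : H)‖ := by
    calc _ ≤ ‖B u‖ * ‖Q (x : H)‖ := re_inner_le_norm _ _
      _ ≤ (‖B‖ * ‖u‖) * (‖Q‖ * ‖(x : H)‖) := by
        gcongr
        · exact B.le_opNorm u
        · exact Q.le_opNorm _
      _ = _ := by rw [hb]; ring
  rw [e1]
  have e3 : 2 * (b * ‖u‖ * ‖(x : H)‖) ≤ m / 2 * ‖(x : H)‖ ^ 2 + (2 * b ^ 2 / m) * ‖u‖ ^ 2 := by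
    have : m / 2 * ‖(x : H)‖ ^ 2 + (2 * b ^ 2 / m) * ‖u‖ ^ 2 - 2 * (b * ‖u‖ * ‖(x : H)‖)
        = m / 2 * (‖(x : H)‖ - 2 * b / m * ‖u‖) ^ 2 := by field_simp; ring
    have h2 : 0 ≤ m / 2 * (‖(x : H)‖ - 2 * b / m * ‖u‖) ^ 2 := by positivity
    linarith
  have e4 : c ^ 2 * ‖u‖ ^ 2 ≤ ‖K u‖ ^ 2 := by
    rw [← mul_pow]; gcongr; exact hK u
  have e5 := mul_le_mul_of_nonneg_left (h x) hε.le
  have e6 : ε * ‖C (x : H)‖ ^ 2 ≤ 1 * ‖C (x : H)‖ ^ 2 := by gcongr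
  have e7 := mul_le_mul_of_nonneg_left (e3) hε.le
  have e8 := mul_le_mul_of_nonneg_left (e2) hε.le
  have e9 : ε * (2 * b ^ 2 / m) * ‖u‖ ^ 2 ≤ c ^ 2 / 2 * ‖u‖ ^ 2 := by gcongr
  have e10 : min (ε * m / 2) (c ^ 2 / 2) * ‖(x : H)‖ ^ 2 ≤ ε * m / 2 * ‖(x : H)‖ ^ 2 := by
    gcongr; exact min_le_left _ _
  have e11 : min (ε * m / 2) (c ^ 2 / 2) * ‖u‖ ^ 2 ≤ c ^ 2 / 2 * ‖u‖ ^ 2 := by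
    gcongr; exact min_le_right _ _
  linarith

theorem aux_ell {𝕜 H U Y Z : Type*} [RCLike 𝕜]
    [NormedAddCommGroup H] [InnerProductSpace 𝕜 H]
    [NormedAddCommGroup U] [InnerProductSpace 𝕜 U]
    [NormedAddCommGroup Y] [InnerProductSpace 𝕜 Y]
    [NormedAddCommGroup Z] [InnerProductSpace 𝕜 Z]
    (C : H →L[𝕜] Y) (K : U →L[𝕜] Z) (z : H) (v : U) (x ξ : H) (u η : U) :
    ell C K z v (x + ξ) (u + η) = ell C K z v x u + ‖C ξ‖ ^ 2 + ‖K η‖ ^ 2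
      + 2 * re (⟪C x, C ξ⟫_𝕜 + ⟪K u, K η⟫_𝕜 + ⟪z, ξ⟫_𝕜 + ⟪v, η⟫_𝕜) := by
  simp only [ell, map_add, inner_add_right, norm_add_sq (𝕜 := 𝕜)]
  ring

theorem aux_kkt {𝕜 E F H : Type*} [RCLike 𝕜]
    [NormedAddCommGroup E] [NormedSpace 𝕜 E] [CompleteSpace E]
    [NormedAddCommGroup F] [InnerProductSpace 𝕜 F] [CompleteSpace F]
    [NormedAddCommGroup H] [InnerProductSpace 𝕜 H] [CompleteSpace H]
    (T : E →L[𝕜] H) (hT : IsClosed (Set.range T)) (S : E →L[𝕜] F) (f : E →L[𝕜] 𝕜)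
    (M : ℝ) (hM : 0 ≤ M) (hS : ∀ e, T e = 0 → ‖e‖ ≤ M * ‖S e‖) :
    ∃ e0 : E, T e0 = 0 ∧ ∃ w : H, ∀ e, ⟪S e0, S e⟫_𝕜 + f e = ⟪w, T e⟫_𝕜 := by
  have hN : IsClosed (LinearMap.ker (T : E →ₗ[𝕜] H) : Set E) := T.isClosed_ker
  generalize hNN : LinearMap.ker (T : E →ₗ[𝕜] H) = N at hN
  have hmem : ∀ e, e ∈ N ↔ T e = 0 := by intro e; rw [← hNN]; exact Iff.rfl
  have : CompleteSpace N := hN.completeSpace_coe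
  obtain ⟨n0, hn0⟩ := aux_bounded_below (S.comp N.subtypeL) M hM
    (fun n => hS n ((hmem n).1 n.2)) (f.comp N.subtypeL)
  have hn0' : ∀ e, T e = 0 → f e = ⟪S n0, S e⟫_𝕜 := fun e he => hn0 ⟨e, (hmem e).2 he⟩
  refine ⟨-n0, (hmem _).1 (N.neg_mem n0.2), ?_⟩
  obtain ⟨e1, he1⟩ := aux_closed_range T hT ((innerSL 𝕜 (S (-n0))).comp S + f) (by
    intro e he
    have := hn0' e he
    simp [this])
  exact ⟨T e1, he1⟩

theorem aux_abs {𝕜 E H U Y Z : Type*} [RCLike 𝕜]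
    [NormedAddCommGroup E] [NormedSpace 𝕜 E] [CompleteSpace E]
    [NormedAddCommGroup H] [InnerProductSpace 𝕜 H] [CompleteSpace H]
    [NormedAddCommGroup U] [InnerProductSpace 𝕜 U] [CompleteSpace U]
    [NormedAddCommGroup Y] [InnerProductSpace 𝕜 Y] [CompleteSpace Y]
    [NormedAddCommGroup Z] [InnerProductSpace 𝕜 Z] [CompleteSpace Z]
    (πx πa : E →L[𝕜] H) (πu : E →L[𝕜] U) (hE : ∀ e, ‖e‖ ≤ ‖πx e‖ + ‖πa e‖ + ‖πu e‖)
    (B : U →L[𝕜] H) (C : H →L[𝕜] Y) (K : U →L[𝕜] Z) (z : H) (v : U)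
    (hran : IsClosed (Set.range (πa + B.comp πu)))
    (δ : ℝ) (hδ : 0 < δ)
    (h : ∀ e, πa e + B (πu e) = 0 →
      δ * (‖πx e‖ ^ 2 + ‖πu e‖ ^ 2) ≤ ‖C (πx e)‖ ^ 2 + ‖K (πu e)‖ ^ 2) :
    ∃ e0, πa e0 + B (πu e0) = 0 ∧ ∃ w : H, ∀ e,
      ⟪C (πx e0), C (πx e)⟫_𝕜 + ⟪K (πu e0), K (πu e)⟫_𝕜 + ⟪z, πx e⟫_𝕜 + ⟪v, πu e⟫_𝕜
        = ⟪w, πa e + B (πu e)⟫_𝕜 := by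
  obtain ⟨S, hSi, hSn⟩ : ∃ S : E →L[𝕜] WithLp 2 (Y × Z),
      (∀ e e', ⟪S e, S e'⟫_𝕜 = ⟪C (πx e), C (πx e')⟫_𝕜 + ⟪K (πu e), K (πu e')⟫_𝕜) ∧
      ∀ e, ‖S e‖ ^ 2 = ‖C (πx e)‖ ^ 2 + ‖K (πu e)‖ ^ 2 := by
    refine ⟨((WithLp.prodContinuousLinearEquiv 2 𝕜 Y Z).symm :
      (Y × Z) →L[𝕜] WithLp 2 (Y × Z)).comp ((C.comp πx).prod (K.comp πu)), ?_, ?_⟩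
    · intro e e'
      rw [WithLp.prod_inner_apply]; rfl
    · intro e
      rw [WithLp.prod_norm_sq_eq_of_L2]; rfl
  have hbd : ∀ e, (πa + B.comp πu) e = 0 → ‖e‖ ≤ ((2 + ‖B‖) * (Real.sqrt δ)⁻¹) * ‖S e‖ := by
    intro e he
    have he' : πa e + B (πu e) = 0 := he
    have h1 := h e he'
    rw [← hSn] at h1
    have key : ∀ r : ℝ, 0 ≤ r → r ^ 2 ≤ ‖πx e‖ ^ 2 + ‖πu e‖ ^ 2 →
        r ≤ (Real.sqrt δ)⁻¹ * ‖S e‖ := by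
      intro r hr hr2
      have hs : 0 < Real.sqrt δ := Real.sqrt_pos.2 hδ
      rw [inv_mul_eq_div, le_div_iff₀ hs]
      apply le_of_sq_le_sq _ (norm_nonneg _)
      rw [mul_pow, Real.sq_sqrt hδ.le]
      nlinarith
    have hxn := key ‖πx e‖ (norm_nonneg _) (by nlinarith [sq_nonneg ‖πu e‖])
    have hun := key ‖πu e‖ (norm_nonneg _) (by nlinarith [sq_nonneg ‖πx e‖])
    have han : ‖πa e‖ ≤ ‖B‖ * ((Real.sqrt δ)⁻¹ * ‖S e‖) := by
      rw [eq_neg_of_add_eq_zero_left he', norm_neg]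
      exact (B.le_opNorm _).trans (by gcongr)
    have := hE e
    linarith
  obtain ⟨e0, h0, w, hw⟩ := aux_kkt (πa + B.comp πu) hran S
    ((innerSL 𝕜 z).comp πx + (innerSL 𝕜 v).comp πu) _ (by positivity) hbd
  refine ⟨e0, h0, w, fun e => ?_⟩
  have h2 := hw e
  rw [hSi] at h2
  rw [add_assoc]
  exact h2

theorem aux_equilibrium {𝕜 H U Y Z : Type*} [RCLike 𝕜]
    [NormedAddCommGroup H] [InnerProductSpace 𝕜 H] [CompleteSpace H]
    [NormedAddCommGroup U] [InnerProductSpace 𝕜 U] [CompleteSpace U]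
    [NormedAddCommGroup Y] [InnerProductSpace 𝕜 Y] [CompleteSpace Y]
    [NormedAddCommGroup Z] [InnerProductSpace 𝕜 Z] [CompleteSpace Z]
    (A : H →ₗ.[𝕜] H) (hAclosed : A.IsClosed)
    (B : U →L[𝕜] H) (C : H →L[𝕜] Y) (K : U →L[𝕜] Z) (z : H) (v : U)
    (hran : IsClosed {y : H | ∃ (x : A.domain) (u : U), A x + B u = y})
    (δ : ℝ) (hδ : 0 < δ)
    (h : ∀ (x : A.domain) (u : U), A x + B u = 0 →
      δ * (‖(x : H)‖ ^ 2 + ‖u‖ ^ 2) ≤ ‖C (x : H)‖ ^ 2 + ‖K u‖ ^ 2) :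
    ∃ (xe : A.domain) (ue : U), A xe + B ue = 0 ∧ ∃ w : H, ∀ (x : A.domain) (u : U),
      ⟪C (xe : H), C (x : H)⟫_𝕜 + ⟪K ue, K u⟫_𝕜 + ⟪z, (x : H)⟫_𝕜 + ⟪v, u⟫_𝕜
        = ⟪w, A x + B u⟫_𝕜 := by
  have : CompleteSpace A.graph := IsClosed.completeSpace_coe (hs := hAclosed)
  obtain ⟨πx, πa, πu, hdom, hmk, hE⟩ : ∃ (πx πa : (A.graph × U) →L[𝕜] H)
      (πu : (A.graph × U) →L[𝕜] U),
      (∀ e : A.graph × U, ∃ x : A.domain, (x : H) = πx e ∧ A x = πa e) ∧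
      (∀ (x : A.domain) (u : U), ∃ e : A.graph × U, πx e = x ∧ πa e = A x ∧ πu e = u) ∧
      (∀ e, ‖e‖ ≤ ‖πx e‖ + ‖πa e‖ + ‖πu e‖) := by
    refine ⟨(ContinuousLinearMap.fst 𝕜 H H).comp
        (A.graph.subtypeL.comp (ContinuousLinearMap.fst 𝕜 _ U)),
      (ContinuousLinearMap.snd 𝕜 H H).comp
        (A.graph.subtypeL.comp (ContinuousLinearMap.fst 𝕜 _ U)),
      ContinuousLinearMap.snd 𝕜 _ U, ?_, ?_, ?_⟩
    · rintro ⟨⟨p, hp⟩, u⟩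
      exact (LinearPMap.mem_graph_iff A).1 hp
    · exact fun x u => ⟨(⟨((x : H), A x), A.mem_graph x⟩, u), rfl, rfl, rfl⟩
    · rintro ⟨⟨⟨a, b⟩, hp⟩, u⟩
      change max (max ‖a‖ ‖b‖) ‖u‖ ≤ ‖a‖ + ‖b‖ + ‖u‖
      have := norm_nonneg a
      have := norm_nonneg b
      have := norm_nonneg u
      exact max_le (max_le (by linarith) (by linarith)) (by linarith)
  have hTr : IsClosed (Set.range (πa + B.comp πu)) := by
    convert hran using 1
    ext y
    constructor
    · rintro ⟨e, rfl⟩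
      obtain ⟨x, hx, hx'⟩ := hdom e
      exact ⟨x, πu e, by rw [hx']; rfl⟩
    · rintro ⟨x, u, rfl⟩
      obtain ⟨e, h1, h2, h3⟩ := hmk x u
      exact ⟨e, by rw [← h2, ← h3]; rfl⟩
  obtain ⟨e0, he0, w, hw⟩ := aux_abs πx πa πu hE B C K z v hTr δ hδ (by
    intro e he
    obtain ⟨x, hx, hx'⟩ := hdom e
    rw [← hx]
    exact h x _ (by rw [hx', he]))
  obtain ⟨xe, hxe, hxe'⟩ := hdom e0
  refine ⟨xe, πu e0, by rw [hxe', he0], w, fun x u => ?_⟩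
  obtain ⟨e, h1, h2, h3⟩ := hmk x u
  rw [hxe, ← h1, ← h2, ← h3]
  exact hw e

/-- **Corollary 4.11**: if `A` is densely defined and closed, `K` is coercive and
`ran [A B]` is closed, then strict pre-dissipativity at *some* controlled equilibrium
with *some* quadratic storage function is equivalent to the Lyapunov-like form
inequality for some bounded self-adjoint operator. -/
theorem strict_predissipativity_some_equilibrium_some_quadratic_storage_iff
    {𝕜 H U Y Z : Type*} [RCLike 𝕜]
    [NormedAddCommGroup H] [InnerProductSpace 𝕜 H] [CompleteSpace H]
    [NormedAddCommGroup U] [InnerProductSpace 𝕜 U] [CompleteSpace U]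
    [NormedAddCommGroup Y] [InnerProductSpace 𝕜 Y] [CompleteSpace Y]
    [NormedAddCommGroup Z] [InnerProductSpace 𝕜 Z] [CompleteSpace Z]
    (A : H →ₗ.[𝕜] H) (hA : Dense (A.domain : Set H)) (hAclosed : A.IsClosed)
    (B : U →L[𝕜] H) (C : H →L[𝕜] Y) (K : U →L[𝕜] Z) (z : H) (v : U)
    (c : ℝ) (hc : 0 < c) (hK : ∀ u : U, c * ‖u‖ ≤ ‖K u‖)
    (hran : IsClosed {y : H | ∃ (x : A.domain) (u : U), A x + B u = y}) :
    (∃ (xe : H) (ue : U) (hxe : xe ∈ A.domain),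
      A ⟨xe, hxe⟩ + B ue = 0 ∧
      ∃ P : H →L[𝕜] H, IsSelfAdjoint P ∧ ∃ w : H, ∃ α : ℝ → ℝ, IsClassK α ∧
        ∀ (x : A.domain) (u : U),
          2 * re ⟪A x + B u, P (x : H) + w⟫_𝕜 ≤
            ell C K z v (x : H) u - ell C K z v xe ue - α ‖(x : H) - xe‖)
    ↔
    (∃ Q : H →L[𝕜] H, IsSelfAdjoint Q ∧ ∃ m : ℝ, 0 < m ∧
      ∀ x : A.domain,
        m * ‖(x : H)‖ ^ 2 ≤ ‖C (x : H)‖ ^ 2 - 2 * re ⟪A x, Q (x : H)⟫_𝕜) := by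
  constructor
  · rintro ⟨xe, ue, hxe, heq, P, hP, w, α, ⟨-, hα, hα0⟩, h⟩
    refine ⟨P, hP, α 1, ?_, ?_⟩
    · rw [← hα0]; exact hα (by simp) (by simp) one_pos
    have key : ∀ ξ : A.domain,
        α ‖(ξ : H)‖ ≤ ‖C (ξ : H)‖ ^ 2 - 2 * re ⟪A ξ, P (ξ : H)⟫_𝕜 := by
      intro ξ
      have h1 := h (⟨xe, hxe⟩ + ξ) ue
      have h2 := h (⟨xe, hxe⟩ + -ξ) ue
      have e1 : A (⟨xe, hxe⟩ + ξ) + B ue = A ξ := by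
        rw [LinearPMap.map_add, add_right_comm, heq, zero_add]
      have e2 : A (⟨xe, hxe⟩ + -ξ) + B ue = -A ξ := by
        rw [LinearPMap.map_add, add_right_comm, heq, zero_add, LinearPMap.map_neg]
      rw [e1] at h1
      rw [e2] at h2
      have l1 := aux_ell C K z v xe ξ ue 0
      have l2 := aux_ell C K z v xe (-ξ) ue 0
      rw [add_zero] at l1 l2
      simp only [Submodule.coe_add, Submodule.coe_neg, add_sub_cancel_left, norm_neg, l1, l2,
        map_add, map_neg, inner_add_right, inner_neg_left, inner_neg_right, map_zero,
        inner_zero_right, norm_zero] at h1 h2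
      linarith
    intro x
    by_cases hx : (x : H) = 0
    · have : x = 0 := Subtype.ext hx
      subst this
      simp
    have hn : 0 < ‖(x : H)‖ := norm_pos_iff.2 hx
    have h1 := key (((‖(x : H)‖⁻¹ : ℝ) : 𝕜) • x)
    have h2 : ‖((((‖(x : H)‖⁻¹ : ℝ) : 𝕜) • x : A.domain) : H)‖ = 1 := by
      rw [Submodule.coe_smul, norm_smul, RCLike.norm_ofReal, abs_of_pos (by positivity)]
      field_simp
    rw [h2, LinearPMap.map_smul, Submodule.coe_smul, map_smul, map_smul, norm_smul,
      inner_smul_left, inner_smul_right, RCLike.conj_ofReal, RCLike.re_ofReal_mul,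
      RCLike.re_ofReal_mul, RCLike.norm_ofReal, abs_of_pos (by positivity)] at h1
    have h3 := mul_le_mul_of_nonneg_right h1 (sq_nonneg ‖(x : H)‖)
    refine h3.trans (le_of_eq ?_)
    field_simp
  · rintro ⟨Q, hQ, m, hm, h⟩
    obtain ⟨P, hP, δ, hδ, hq⟩ := aux_coercive A B C K c hc hK Q hQ m hm h
    obtain ⟨xe, ue, heq, w, hw⟩ := aux_equilibrium A hAclosed B C K z v hran δ hδ (by
      intro x u hxu
      have := hq x u
      rw [hxu] at this
      simpa using this)
    refine ⟨xe, ue, xe.2, heq, P, hP, w - P xe, fun r => δ * r ^ 2, ⟨by fun_prop, ?_, by simp⟩, ?_⟩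
    · intro a ha b _ hab
      have ha' : (0 : ℝ) ≤ a := ha
      change δ * a ^ 2 < δ * b ^ 2
      gcongr
    intro x u
    obtain ⟨ξ, rfl⟩ : ∃ ξ, x = xe + ξ := ⟨x - xe, by abel⟩
    obtain ⟨η, rfl⟩ : ∃ η, u = ue + η := ⟨u - ue, by abel⟩
    have e1 : A (xe + ξ) + B (ue + η) = A ξ + B η := by
      rw [LinearPMap.map_add, map_add, add_add_add_comm, heq, zero_add]
    have e2 : P ((xe + ξ : A.domain) : H) + (w - P xe) = P ξ + w := by
      rw [Submodule.coe_add, map_add]; abel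
    rw [e1, e2, Submodule.coe_add, aux_ell, hw, add_sub_cancel_left, inner_add_right, map_add,
      ← inner_re_symm (𝕜 := 𝕜) w]
    have := hq ξ η
    have h0 : 0 ≤ δ * ‖η‖ ^ 2 := by positivity
    linarith
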